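/- arXiv:2306.06422 — 2 statements merged into one kernel-verified Lean document; each statement's English description precedes it below -/
import Mathlib

section
/- Let p be an odd prime, m even, q = p^m, and Π : 𝔽_q → 𝔽_q perfect nonlinear with |Π⁻¹(0)| = 1, Π weakly regular, and the map a ↦ Π_a*(0) on 𝔽_q^* not surjective onto 𝔽_p. Then the weight distribution of C̄_Π is: Ā_0 = 1, Ā_{(p−1)(p^{m−1}−p^{m/2−1})} = p^m(p^m−1)/2, Ā_{(p−1)p^{m−1}−p^{m/2−1}} = p^m(p^m−1)(p−1)/2, Ā_{(p−1)p^{m−1}} = p^{m+1}−p, Ā_{(p−1)p^{m−1}+p^{m/2−1}} = p^m(p^m−1)(p−1)/2, Ā_{(p−1)(p^{m−1}+p^{m/2−1})} = p^m(p^m−1)/2, Ā_{p^m} = p−1, and all other Ā_i = 0. -/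
open Finset

/-- The code `C̄_Π = {(Tr(aΠ(x)+bx+c))_{x∈𝔽_q} : a,b,c ∈ 𝔽_q}` as a set of functions. -/
def CbarCode (p : ℕ) [Fact p.Prime] (F : Type*) [Field F] [Fintype F]
    [Algebra (ZMod p) F] (Pl : F → F) : Set (F → ZMod p) :=
  {g | ∃ a b c : F, g = fun x => Algebra.trace (ZMod p) F (a * Pl x + b * x + c)}

/-- Hamming weight of a word of length `q`. -/
def wtBar (p : ℕ) [Fact p.Prime] (F : Type*) [Fintype F] [DecidableEq F]
    (g : F → ZMod p) : ℕ :=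
  (Finset.univ.filter (fun x : F => g x ≠ 0)).card

/-- Number of codewords of `C̄_Π` of Hamming weight `i`. -/
noncomputable def AbarCount (p : ℕ) [Fact p.Prime] (F : Type*) [Field F] [Fintype F]
    [DecidableEq F] [Algebra (ZMod p) F] (Pl : F → F) (i : ℕ) : ℕ :=
  Nat.card {g : F → ZMod p | g ∈ CbarCode p F Pl ∧ wtBar p F g = i}

/-!
Two facts about a primitive `p`-th root of unity `ξ` drive the proof. The only integral linear
relation between the powers `1, ξ, …, ξ ^ (p - 1)` is that they sum to zero, so the value of
`∑ x, ξ ^ f(x)` determines the size of every fibre of `f` as soon as it has the form `v ξ ^ d` with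
`v` an integer. For a word `Tr(aΠ(x) + bx) + t` with `a ≠ 0` this sum is the Walsh value
`ε_a p ^ (m / 2) ξ ^ d`; hence the word has one weight when `t = -d` and another one for the `p - 1`
remaining `t`, and both depend only on the sign `ε_a`.

The signs are balanced. Summing the Walsh values at `0` over all `a ∈ 𝔽_q` counts the zeros of `Π`,
so `|Π⁻¹(0)| = 1` forces `∑_{a ≠ 0} ε_a ξ ^ (Π_a*(0)) = 0`. By the first fact the signs then add up
to the same integer over each fibre of `a ↦ Π_a*(0)`, and one of these fibres is empty.
-/

section RootsOfUnity

variable {p : ℕ} [Fact p.Prime] {K : Type*} [Field K] [CharZero K] {ξ : K}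

lemma eq_of_sum_mul_pow_val_eq_zero (hξ : IsPrimitiveRoot ξ p) {c : ZMod p → ℤ}
    (h : ∑ j, (c j : K) * ξ ^ j.val = 0) (i j : ZMod p) : c i = c j := by
  obtain ⟨n, rfl⟩ := Nat.exists_eq_succ_of_ne_zero (NeZero.ne p)
  exact (hξ.sum_eq_zero_iff_forall_eq_int Fact.out c).1 h i j

lemma mul_sum_fiber_eq_of_sum_mul_pow_val_eq (hξ : IsPrimitiveRoot ξ p) {ι : Type*}
    {T : Finset ι} {e : ι → ℤ} {f : ι → ZMod p} {v : ℤ} {d : ZMod p}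
    (h : ∑ i ∈ T, (e i : K) * ξ ^ (f i).val = v * ξ ^ d.val) (j : ZMod p) :
    p * ∑ i ∈ T with f i = j, e i = ∑ i ∈ T, e i - v + if j = d then p * v else 0 := by
  set c : ZMod p → ℤ := fun k => ∑ i ∈ T with f i = k, e i - if k = d then v else 0 with hc
  have sum_c_mul : ∑ k, (c k : K) * ξ ^ k.val = 0 := by
    have fiberwise : ∑ k, ((∑ i ∈ T with f i = k, e i : ℤ) : K) * ξ ^ k.val = v * ξ ^ d.val := by
      rw [← h, ← Finset.sum_fiberwise T f]
      refine Finset.sum_congr rfl fun k _ => ?_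
      rw [Int.cast_sum, Finset.sum_mul]
      exact Finset.sum_congr rfl fun i hi => by rw [(Finset.mem_filter.1 hi).2]
    simp only [hc, Int.cast_sub, sub_mul, Finset.sum_sub_distrib, fiberwise]
    simp
  have sum_c : ∑ k, c k = ∑ i ∈ T, e i - v := by
    simp [hc, Finset.sum_sub_distrib, Finset.sum_fiberwise]
  have const_c : ∑ k, c k = p * c j := by
    simp [eq_of_sum_mul_pow_val_eq_zero hξ sum_c_mul _ j]
  rw [← sum_c, const_c]
  simp only [hc]
  split_ifs <;> ring

lemma sum_eq_zero_of_sum_mul_pow_val_eq_zero (hξ : IsPrimitiveRoot ξ p) {ι : Type*}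
    {T : Finset ι} {e : ι → ℤ} {f : ι → ZMod p}
    (h : ∑ i ∈ T, (e i : K) * ξ ^ (f i).val = 0) {r : ZMod p} (hr : ∀ i ∈ T, f i ≠ r) :
    ∑ i ∈ T, e i = 0 := by
  have key := mul_sum_fiber_eq_of_sum_mul_pow_val_eq hξ (v := 0) (d := 0) (by simpa using h) r
  simpa [Finset.filter_false_of_mem hr] using key.symm

end RootsOfUnity

section TranslateEnumerator

open Polynomial

variable {α β : Type*} [Fintype α] [Fintype β] [DecidableEq β] [AddZeroClass β]

/-- The weight enumerator of the words `f + t`, where `t` runs over the constants. -/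
noncomputable def translateEnumerator (f : α → β) : ℕ[X] :=
  ∑ t, X ^ hammingNorm (fun x => f x + t)

lemma translateEnumerator_eq_of_hammingNorm_eq {f : α → β} {A B : ℕ} {c : β}
    (h : ∀ t, hammingNorm (fun x => f x + t) = if t = c then A else B) :
    translateEnumerator f = X ^ A + (Fintype.card β - 1) • X ^ B := by
  simp only [translateEnumerator, h]
  rw [Fintype.sum_eq_add_sum_compl c, if_pos rfl]
  congr 1
  rw [Finset.sum_congr rfl fun t ht => by rw [if_neg (by simpa using ht)], Finset.sum_const,
    Finset.card_compl, Finset.card_singleton]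

lemma translateEnumerator_zero :
    translateEnumerator (0 : α → β) = 1 + (Fintype.card β - 1) • X ^ Fintype.card α := by
  rw [← pow_zero X]
  refine translateEnumerator_eq_of_hammingNorm_eq (c := 0) fun t => ?_
  split_ifs with ht <;> simp [hammingNorm, ht]

end TranslateEnumerator

section TranslateWeights

open Polynomial

variable {p : ℕ} [Fact p.Prime] {K : Type*} [Field K] [CharZero K] {ξ : K}
  {α : Type*} [Fintype α] {f : α → ZMod p} {d : ZMod p}

lemma mul_hammingNorm_add_const (hξ : IsPrimitiveRoot ξ p) {v : ℤ}
    (h : ∑ x, ξ ^ (f x).val = v * ξ ^ d.val) (t : ZMod p) :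
    (p : ℤ) * hammingNorm (fun x => f x + t) =
      (p - 1) * Fintype.card α + v - if t = -d then p * v else 0 := by
  have compl : (#{x | f x = -t} : ℤ) + hammingNorm (fun x => f x + t) = Fintype.card α := by
    simp only [hammingNorm, ne_eq, ← eq_neg_iff_add_eq_zero]
    exact_mod_cast Finset.card_filter_add_card_filter_not (s := univ) (fun x => f x = -t)
  have fiber := mul_sum_fiber_eq_of_sum_mul_pow_val_eq hξ (T := univ) (e := fun _ => 1)
    (by simpa using h) (-t)
  simp only [Finset.sum_const, nsmul_one, Finset.card_univ, neg_eq_iff_eq_neg] at fiber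
  linear_combination (p : ℤ) * compl - fiber

lemma add_const_ne_zero_of_abs_lt_card (hξ : IsPrimitiveRoot ξ p) {v : ℤ}
    (h : ∑ x, ξ ^ (f x).val = v * ξ ^ d.val) (hv : |v| < Fintype.card α) (t : ZMod p) :
    (fun x => f x + t) ≠ 0 := by
  intro hzero
  have weight := mul_hammingNorm_add_const hξ h t
  have two_le : (2 : ℤ) ≤ p := mod_cast (Fact.out : p.Prime).two_le
  rw [hzero, hammingNorm_zero, Nat.cast_zero, mul_zero] at weight
  obtain ⟨_, _⟩ := abs_lt.1 hv
  split_ifs at weight <;> nlinarith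

lemma translateEnumerator_of_sum_eq_zero (hξ : IsPrimitiveRoot ξ p) {n : ℕ}
    (hα : Fintype.card α = p * n) (h : ∑ x, ξ ^ (f x).val = 0) :
    translateEnumerator f = p • X ^ ((p - 1) * n) := by
  have weight (t : ZMod p) : hammingNorm (fun x => f x + t) = (p - 1) * n := by
    have key := mul_hammingNorm_add_const hξ (v := 0) (d := 0) (by simpa using h) t
    have hp := NeZero.ne p
    zify [NeZero.one_le (n := p)] at hα hp ⊢
    apply mul_left_cancel₀ hp
    simp only [hα] at key
    simpa [mul_left_comm] using key
  simp [translateEnumerator, weight]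

lemma translateEnumerator_of_sum_eq (hξ : IsPrimitiveRoot ξ p) {s : ℕ}
    (hα : Fintype.card α = (p * s) ^ 2) (h : ∑ x, ξ ^ (f x).val = (p * s) * ξ ^ d.val) :
    translateEnumerator f =
      X ^ ((p - 1) * (p * s ^ 2 - s)) + (p - 1) • X ^ ((p - 1) * (p * s ^ 2) + s) := by
  refine (translateEnumerator_eq_of_hammingNorm_eq (c := -d) fun t => ?_).trans (by rw [ZMod.card])
  have key := mul_hammingNorm_add_const hξ (v := p * s) (by simpa using h) t
  have hp := NeZero.ne p
  have hs : s ≤ p * s ^ 2 :=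
    (Nat.le_self_pow two_ne_zero s).trans (Nat.le_mul_of_pos_left _ (NeZero.pos p))
  zify [NeZero.one_le (n := p), hs] at hα hp ⊢
  apply mul_left_cancel₀ hp
  rw [key, hα]
  split_ifs <;> ring

lemma translateEnumerator_of_sum_eq_neg (hξ : IsPrimitiveRoot ξ p) {s : ℕ}
    (hα : Fintype.card α = (p * s) ^ 2) (h : ∑ x, ξ ^ (f x).val = -(p * s) * ξ ^ d.val) :
    translateEnumerator f =
      X ^ ((p - 1) * (p * s ^ 2 + s)) + (p - 1) • X ^ ((p - 1) * (p * s ^ 2) - s) := by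
  refine (translateEnumerator_eq_of_hammingNorm_eq (c := -d) fun t => ?_).trans (by rw [ZMod.card])
  have key := mul_hammingNorm_add_const hξ (v := -(p * s)) (by simpa using h) t
  have hp := NeZero.ne p
  have hs : s ≤ (p - 1) * (p * s ^ 2) := calc
    s ≤ s ^ 2 := Nat.le_self_pow two_ne_zero s
    _ ≤ p * s ^ 2 := Nat.le_mul_of_pos_left _ (NeZero.pos p)
    _ ≤ (p - 1) * (p * s ^ 2) :=
      Nat.le_mul_of_pos_left _ (Nat.sub_pos_of_lt (Fact.out : p.Prime).one_lt)
  zify [NeZero.one_le (n := p), hs] at hα hp ⊢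
  apply mul_left_cancel₀ hp
  rw [key, hα]
  split_ifs <;> ring

end TranslateWeights

section WeightEnumerator

open Polynomial

open scoped Classical in
/-- The weight enumerator `∑ X ^ wt(g)` of a code `C`, the sum being over the words `g` of `C`. -/
noncomputable def weightEnumerator {α β : Type*} [Fintype α] [Fintype β] [DecidableEq β] [Zero β]
    (C : Set (α → β)) : ℕ[X] :=
  ∑ g with g ∈ C, X ^ hammingNorm g

lemma weightEnumerator_range {ι α β : Type*} [Fintype ι] [Fintype α] [Fintype β] [DecidableEq β]
    [Zero β] {w : ι → α → β} (hw : Function.Injective w) :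
    weightEnumerator (Set.range w) = ∑ i, X ^ hammingNorm (w i) := by
  classical
  rw [weightEnumerator, ← Finset.sum_image (f := fun g => X ^ hammingNorm g) hw.injOn]
  congr 1
  ext
  simp

lemma coeff_sum_smul_X_pow_apply {R ι : Type*} [Semiring R] [Fintype ι] {w : ι → ℕ}
    (hw : Function.Injective w) (A : ι → ℕ) (k : ι) :
    (∑ i, A i • X ^ w i : R[X]).coeff (w k) = A k := by
  classical
  simp [Polynomial.finsetSum_coeff, coeff_X_pow, hw.eq_iff]

lemma coeff_sum_smul_X_pow_of_notMem_range {R ι : Type*} [Semiring R] [Fintype ι] {w : ι → ℕ}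
    (A : ι → ℕ) {n : ℕ} (hn : n ∉ Set.range w) :
    (∑ i, A i • X ^ w i : R[X]).coeff n = 0 := by
  rw [Polynomial.finsetSum_coeff]
  refine Finset.sum_eq_zero fun i _ => ?_
  simp [coeff_X_pow, show n ≠ w i from fun h => hn ⟨i, h.symm⟩]

lemma AbarCount_eq_coeff_weightEnumerator {p : ℕ} [Fact p.Prime] {F : Type*} [Field F] [Fintype F]
    [DecidableEq F] [Algebra (ZMod p) F] (Pl : F → F) (i : ℕ) :
    AbarCount p F Pl i = (weightEnumerator (CbarCode p F Pl)).coeff i := by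
  classical
  simp only [weightEnumerator, Polynomial.finsetSum_coeff, coeff_X_pow, Finset.sum_boole,
    Finset.filter_filter, Nat.cast_id, AbarCount, Nat.card_coe_set_eq]
  rw [← Set.ncard_coe_finset]
  congr 1
  ext g
  simp [wtBar, hammingNorm, eq_comm]

end WeightEnumerator

section Definitions

variable {p : ℕ} {F : Type*} [Field F] [Algebra (ZMod p) F] {K : Type*} [CommRing K]

variable (p) in
/-- The component `Π_a(x) = Tr(aΠ(x))` of `Π`. -/
noncomputable def component (Pl : F → F) (a : F) : F → ZMod p :=
  fun x => Algebra.trace (ZMod p) F (a * Pl x)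

/-- The Walsh transform `W_f(y) = ∑ ξ ^ (f(x) + Tr(yx))`, with a plus sign in the exponent. -/
noncomputable def walsh [Fintype F] (ξ : K) (f : F → ZMod p) (y : F) : K :=
  ∑ x, ξ ^ (f x + Algebra.trace (ZMod p) F (y * x)).val

/-- Every component `Π_a` with `a ≠ 0` is weakly regular bent, with sign `ε a` and dual `D a`.
The natural number `r` plays the role of `√q`, so this only makes sense for `q` a square. -/
structure IsWeaklyRegular [Fintype F] (ξ : K) (r : ℕ) (Pl : F → F) (ε : F → ℤ)
    (D : F → F → ZMod p) : Prop where
  sign_eq : ∀ a ≠ 0, ε a = 1 ∨ ε a = -1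
  walsh_eq : ∀ a ≠ 0, ∀ y, walsh ξ (component p Pl a) y = (ε a * r) * ξ ^ (D a y).val

variable (p) in
/-- The words of `C̄_Π`. Only `Tr(c)` matters for the constant term, so the parameters are
`a`, `b` and `t = Tr(c)`. -/
noncomputable def codeword (Pl : F → F) : F × F × ZMod p →ₗ[ZMod p] F → ZMod p where
  toFun v x := component p Pl v.1 x + Algebra.trace (ZMod p) F (v.2.1 * x) + v.2.2
  map_add' v w := by
    ext x
    simp only [component, Prod.fst_add, Prod.snd_add, add_mul, map_add, Pi.add_apply]
    ring
  map_smul' c v := by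
    ext x
    simp [component, mul_add]

end Definitions

section TraceSums

variable {p : ℕ} [Fact p.Prime] {F : Type*} [Field F] [Fintype F] [Algebra (ZMod p) F]
  {K : Type*} [Field K] {ξ : K}

lemma sum_pow_trace_mul (hξ : IsPrimitiveRoot ξ p) [DecidableEq F] (y : F) :
    ∑ x : F, ξ ^ (Algebra.trace (ZMod p) F (x * y)).val =
      if y = 0 then (Fintype.card F : K) else 0 := by
  let ψ : AddChar F K := (AddChar.zmodChar p hξ.pow_eq_one).compAddMonoidHom
    (Algebra.trace (ZMod p) F).toAddMonoidHom
  have ψ_apply (x : F) : ψ x = ξ ^ (Algebra.trace (ZMod p) F x).val := rfl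
  have ψ_ne_one : ψ ≠ 1 := by
    obtain ⟨z, hz⟩ := Algebra.trace_surjective (ZMod p) F 1
    refine AddChar.ne_one_iff.2 ⟨z, ?_⟩
    rw [ψ_apply, hz, ZMod.val_one, pow_one]
    exact hξ.ne_one (Fact.out : p.Prime).one_lt
  simpa [ψ_apply] using AddChar.sum_mulShift y (AddChar.IsPrimitive.of_ne_one ψ_ne_one)

lemma walsh_zero_left [DecidableEq F] (hξ : IsPrimitiveRoot ξ p) (y : F) :
    walsh ξ (0 : F → ZMod p) y = if y = 0 then (Fintype.card F : K) else 0 := by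
  simpa [walsh, mul_comm y] using sum_pow_trace_mul hξ y

lemma sum_walsh_component_zero [DecidableEq F] (hξ : IsPrimitiveRoot ξ p) (Pl : F → F) :
    ∑ a, walsh ξ (component p Pl a) 0 = Fintype.card F * #{x | Pl x = 0} := by
  simp only [walsh, component, zero_mul, map_zero, add_zero]
  rw [Finset.sum_comm]
  simp [sum_pow_trace_mul hξ, ← Finset.sum_filter, mul_comm]

end TraceSums

lemma card_filter_ne_one_eq_of_sum_sign_eq_zero {ι : Type*} {T : Finset ι} {ε : ι → ℤ}
    (hε : ∀ a ∈ T, ε a = 1 ∨ ε a = -1) (hsum : ∑ a ∈ T, ε a = 0) :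
    #{a ∈ T | ε a ≠ 1} = #{a ∈ T | ε a = 1} := by
  have eq_ite : ∀ a ∈ T, ε a = if ε a = 1 then 1 else -1 := by grind
  rw [Finset.sum_congr rfl eq_ite] at hsum
  simp only [Finset.sum_ite, Finset.sum_const, nsmul_eq_mul] at hsum
  lia

section Code

open Polynomial

variable {p : ℕ} [Fact p.Prime] {F : Type*} [Field F] [Fintype F] [Algebra (ZMod p) F]
  {Pl : F → F}

lemma CbarCode_eq_range_codeword (Pl : F → F) :
    CbarCode p F Pl = Set.range (codeword p Pl) := by
  ext g
  constructor
  · rintro ⟨a, b, c, rfl⟩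
    exact ⟨(a, b, Algebra.trace (ZMod p) F c), by ext x; simp [codeword, component]⟩
  · rintro ⟨⟨a, b, t⟩, rfl⟩
    obtain ⟨c, rfl⟩ := Algebra.trace_surjective (ZMod p) F t
    exact ⟨a, b, c, by ext x; simp [codeword, component]⟩

lemma weightEnumerator_CbarCode (hinj : Function.Injective (codeword p Pl)) :
    weightEnumerator (CbarCode p F Pl) = ∑ a, ∑ b,
      translateEnumerator fun x => component p Pl a x + Algebra.trace (ZMod p) F (b * x) := by
  simp only [CbarCode_eq_range_codeword, weightEnumerator_range hinj, Fintype.sum_prod_type,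
    translateEnumerator]
  rfl

end Code

namespace IsWeaklyRegular

open Polynomial

variable {p : ℕ} [Fact p.Prime] {F : Type*} [Field F] [Fintype F] [Algebra (ZMod p) F]
  {K : Type*} [Field K] [CharZero K] {ξ : K} {r s : ℕ} {Pl : F → F} {ε : F → ℤ}
  {D : F → F → ZMod p}

lemma codeword_injective (hPl : IsWeaklyRegular ξ r Pl ε D) (hξ : IsPrimitiveRoot ξ p)
    (hF : Fintype.card F = r ^ 2) : Function.Injective (codeword p Pl) := by
  classical
  rw [injective_iff_map_eq_zero]
  rintro ⟨a, b, t⟩ hword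
  have ha : a = 0 := by
    by_contra ha
    refine add_const_ne_zero_of_abs_lt_card hξ (v := ε a * r)
      ((hPl.walsh_eq a ha b).trans (by push_cast; rfl)) ?_ t hword
    have one_lt_r : 1 < r := (Nat.one_lt_pow_iff two_ne_zero).1 (hF ▸ Fintype.one_lt_card)
    have abs_sign : |ε a| = 1 := by rcases hPl.sign_eq a ha with h | h <;> simp [h]
    rw [abs_mul, abs_sign, one_mul, Nat.abs_cast, hF]
    exact_mod_cast lt_self_pow₀ one_lt_r one_lt_two
  subst ha
  have hb : b = 0 := by
    by_contra hb
    refine add_const_ne_zero_of_abs_lt_card hξ (v := 0) (d := 0) ?_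
      (by simpa using Fintype.card_pos) t hword
    simpa [walsh, component, hb] using walsh_zero_left hξ b
  subst hb
  have ht : t = 0 := by simpa [codeword, component] using congrFun hword 0
  rw [ht]
  rfl

lemma sum_sign_eq_zero [DecidableEq F] (hPl : IsWeaklyRegular ξ r Pl ε D) (hξ : IsPrimitiveRoot ξ p)
    (hr : r ≠ 0) (hzero : #{x | Pl x = 0} = 1) {c : ZMod p} (hc : ∀ a ≠ 0, D a 0 ≠ c) :
    ∑ a ∈ univ.erase 0, ε a = 0 := by
  refine sum_eq_zero_of_sum_mul_pow_val_eq_zero hξ (f := fun a => D a 0) ?_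
    fun a ha => hc a (Finset.ne_of_mem_erase ha)
  have walsh_component_zero : walsh ξ (component p Pl 0) 0 = Fintype.card F := by
    simp [walsh, component]
  have sum_walsh : ∑ a ∈ univ.erase 0, walsh ξ (component p Pl a) 0 = 0 := by
    have total := sum_walsh_component_zero hξ Pl
    rwa [← Finset.add_sum_erase univ _ (Finset.mem_univ 0), walsh_component_zero, hzero,
      Nat.cast_one, mul_one, add_eq_left] at total
  have factor : ∑ a ∈ univ.erase 0, walsh ξ (component p Pl a) 0 =
      r * ∑ a ∈ univ.erase 0, (ε a : K) * ξ ^ (D a 0).val := by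
    rw [Finset.mul_sum]
    refine Finset.sum_congr rfl fun a ha => ?_
    rw [hPl.walsh_eq a (Finset.ne_of_mem_erase ha)]
    ring
  exact (mul_eq_zero.1 (factor.symm.trans sum_walsh)).resolve_left (Nat.cast_ne_zero.2 hr)

lemma translateEnumerator_component_add_trace (hPl : IsWeaklyRegular ξ (p * s) Pl ε D)
    (hξ : IsPrimitiveRoot ξ p) (hF : Fintype.card F = (p * s) ^ 2) {a : F} (ha : a ≠ 0) (b : F) :
    translateEnumerator (fun x => component p Pl a x + Algebra.trace (ZMod p) F (b * x)) =
      if ε a = 1 then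
        X ^ ((p - 1) * (p * s ^ 2 - s)) + (p - 1) • X ^ ((p - 1) * (p * s ^ 2) + s)
      else X ^ ((p - 1) * (p * s ^ 2 + s)) + (p - 1) • X ^ ((p - 1) * (p * s ^ 2) - s) := by
  have hW := hPl.walsh_eq a ha b
  split_ifs with hε
  · exact translateEnumerator_of_sum_eq hξ (d := D a b) hF (hW.trans (by simp [hε]))
  · exact translateEnumerator_of_sum_eq_neg hξ (d := D a b) hF
      (hW.trans (by simp [(hPl.sign_eq a ha).resolve_left hε]))

end IsWeaklyRegular

/-- The seven weights of `C̄_Π` in increasing order, where `q = (ps)²`. -/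
def cbarWeight (p s : ℕ) : Fin 7 → ℕ :=
  ![0, (p - 1) * (p * s ^ 2 - s), (p - 1) * (p * s ^ 2) - s, (p - 1) * (p * s ^ 2),
    (p - 1) * (p * s ^ 2) + s, (p - 1) * (p * s ^ 2 + s), (p * s) ^ 2]

/-- The number of words of `C̄_Π` of each of the seven weights in `cbarWeight`. -/
def cbarMultiplicity (p q : ℕ) : Fin 7 → ℕ :=
  ![1, q * (q - 1) / 2, q * (q - 1) * (p - 1) / 2, p * (q - 1),
    q * (q - 1) * (p - 1) / 2, q * (q - 1) / 2, p - 1]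

lemma cbarWeight_strictMono {p s : ℕ} (hp : 3 ≤ p) (hs : 0 < s) : StrictMono (cbarWeight p s) := by
  obtain ⟨c, rfl⟩ := Nat.exists_eq_add_of_le' hp
  obtain ⟨n, hn⟩ : ∃ n, (c + 3) * s ^ 2 = (c + 2) * s + n + 1 := by
    refine Nat.exists_eq_add_of_lt ?_
    rw [sq, ← mul_assoc]
    exact (Nat.mul_lt_mul_of_pos_right (by omega) hs).trans_le (Nat.le_mul_of_pos_right _ hs)
  have hq : ((c + 3) * s) ^ 2 = (c + 3) * ((c + 2) * s + n + 1) := by rw [← hn]; ring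
  have sub_eq : (c + 2) * s + n + 1 - s = (c + 1) * s + n + 1 := by
    rw [Nat.sub_eq_iff_eq_add] <;> nlinarith
  refine Fin.strictMono_iff_lt_succ.2 fun i => ?_
  simp only [cbarWeight, hn, hq, sub_eq, show c + 3 - 1 = c + 2 from rfl]
  fin_cases i
  · change 0 < (c + 2) * ((c + 1) * s + n + 1)
    positivity
  · change (c + 2) * ((c + 1) * s + n + 1) < (c + 2) * ((c + 2) * s + n + 1) - s
    rw [Nat.lt_sub_iff_add_lt]
    nlinarith [Nat.zero_le (c * s)]
  · change (c + 2) * ((c + 2) * s + n + 1) - s < (c + 2) * ((c + 2) * s + n + 1)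
    exact Nat.sub_lt (by positivity) hs
  · change (c + 2) * ((c + 2) * s + n + 1) < (c + 2) * ((c + 2) * s + n + 1) + s
    exact Nat.lt_add_of_pos_right hs
  · change (c + 2) * ((c + 2) * s + n + 1) + s < (c + 2) * ((c + 2) * s + n + 1 + s)
    nlinarith [Nat.zero_le (c * s)]
  · change (c + 2) * ((c + 2) * s + n + 1 + s) < (c + 3) * ((c + 2) * s + n + 1)
    nlinarith [Nat.zero_le (c * s)]

section Distribution

open Polynomial

variable {p : ℕ} [Fact p.Prime] {F : Type*} [Field F] [Fintype F] [Algebra (ZMod p) F]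
  {K : Type*} [Field K] [CharZero K] {ξ : K} {s : ℕ} {Pl : F → F} {ε : F → ℤ}
  {D : F → F → ZMod p}

lemma sum_translateEnumerator_trace (hξ : IsPrimitiveRoot ξ p) {n : ℕ}
    (hn : Fintype.card F = p * n) :
    ∑ b : F, translateEnumerator (fun x => Algebra.trace (ZMod p) F (b * x)) =
      1 + (p - 1) • X ^ Fintype.card F + ((Fintype.card F - 1) * p) • X ^ ((p - 1) * n) := by
  classical
  have enumerator_zero : translateEnumerator (fun x => Algebra.trace (ZMod p) F (0 * x)) =
      1 + (p - 1) • X ^ Fintype.card F := by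
    simpa [Pi.zero_def] using translateEnumerator_zero (α := F) (β := ZMod p)
  have enumerator_ne_zero (b : F) (hb : b ∈ univ.erase 0) :
      translateEnumerator (fun x => Algebra.trace (ZMod p) F (b * x)) = p • X ^ ((p - 1) * n) := by
    refine translateEnumerator_of_sum_eq_zero hξ hn ?_
    simpa [walsh, Finset.ne_of_mem_erase hb] using walsh_zero_left hξ b
  rw [← Finset.add_sum_erase univ _ (Finset.mem_univ 0), enumerator_zero,
    Finset.sum_congr rfl enumerator_ne_zero]
  simp [Finset.card_erase_of_mem, mul_assoc]

variable [DecidableEq F]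

lemma IsWeaklyRegular.weightEnumerator_eq (hPl : IsWeaklyRegular ξ (p * s) Pl ε D)
    (hξ : IsPrimitiveRoot ξ p) (hF : Fintype.card F = (p * s) ^ 2) :
    weightEnumerator (CbarCode p F Pl) =
      1 + (p - 1) • X ^ Fintype.card F
        + ((Fintype.card F - 1) * p) • X ^ ((p - 1) * (p * s ^ 2))
        + (#{a ∈ univ.erase 0 | ε a = 1} * Fintype.card F) •
          (X ^ ((p - 1) * (p * s ^ 2 - s)) + (p - 1) • X ^ ((p - 1) * (p * s ^ 2) + s))
        + (#{a ∈ univ.erase 0 | ε a ≠ 1} * Fintype.card F) •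
          (X ^ ((p - 1) * (p * s ^ 2 + s)) + (p - 1) • X ^ ((p - 1) * (p * s ^ 2) - s)) := by
  rw [weightEnumerator_CbarCode (hPl.codeword_injective hξ hF),
    ← Finset.add_sum_erase univ _ (Finset.mem_univ 0), add_assoc (_ + _)]
  congr 1
  · simpa [component] using sum_translateEnumerator_trace hξ (n := p * s ^ 2) (by rw [hF]; ring)
  · rw [Finset.sum_congr rfl fun a ha => Finset.sum_congr rfl fun b _ =>
      hPl.translateEnumerator_component_add_trace hξ hF (Finset.ne_of_mem_erase ha) b]
    simp only [Finset.sum_const, Finset.card_univ, smul_ite, Finset.sum_ite, mul_smul, ne_eq]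

lemma IsWeaklyRegular.weightEnumerator_eq_sum (hPl : IsWeaklyRegular ξ (p * s) Pl ε D)
    (hξ : IsPrimitiveRoot ξ p) (hF : Fintype.card F = (p * s) ^ 2)
    (hsum : ∑ a ∈ univ.erase 0, ε a = 0) :
    weightEnumerator (CbarCode p F Pl) =
      ∑ k, cbarMultiplicity p (Fintype.card F) k • X ^ cbarWeight p s k := by
  have card_neg : #{a ∈ univ.erase (0 : F) | ε a ≠ 1} = #{a ∈ univ.erase (0 : F) | ε a = 1} :=
    card_filter_ne_one_eq_of_sum_sign_eq_zero
      (fun a ha => hPl.sign_eq a (Finset.ne_of_mem_erase ha)) hsum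
  have card_add : #{a ∈ univ.erase (0 : F) | ε a = 1} + #{a ∈ univ.erase (0 : F) | ε a ≠ 1} =
      Fintype.card F - 1 := by
    rw [Finset.card_filter_add_card_filter_not, Finset.card_erase_of_mem (Finset.mem_univ 0),
      Finset.card_univ]
  rw [hPl.weightEnumerator_eq hξ hF, card_neg]
  set q := Fintype.card F
  set n := #{a ∈ univ.erase (0 : F) | ε a = 1}
  have two_mul_n : q - 1 = n * 2 := by omega
  have half : q * (q - 1) / 2 = n * q := by
    rw [two_mul_n, ← mul_assoc, Nat.mul_div_cancel _ two_pos, mul_comm]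
  have half_mul : q * (q - 1) * (p - 1) / 2 = n * q * (p - 1) := by
    rw [← half, Nat.div_mul_right_comm ⟨q * n, by rw [two_mul_n]; ring⟩]
  simp only [cbarMultiplicity, half, half_mul, cbarWeight, ← hF]
  simp only [nsmul_eq_mul, Nat.cast_mul, smul_add, Fin.sum_univ_seven, Matrix.cons_val_zero,
    Nat.cast_one, pow_zero, mul_one, Matrix.cons_val_one, Matrix.cons_val]
  ring

lemma IsWeaklyRegular.AbarCount_cbarWeight (hPl : IsWeaklyRegular ξ (p * s) Pl ε D)
    (hξ : IsPrimitiveRoot ξ p) (hp : Odd p) (hF : Fintype.card F = (p * s) ^ 2)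
    (hsum : ∑ a ∈ univ.erase 0, ε a = 0) (k : Fin 7) :
    AbarCount p F Pl (cbarWeight p s k) = cbarMultiplicity p (Fintype.card F) k := by
  have hs : s ≠ 0 := by
    rintro rfl
    simp at hF
  have three_le : 3 ≤ p := (Fact.out : p.Prime).odd_iff.1 hp
  rw [AbarCount_eq_coeff_weightEnumerator, hPl.weightEnumerator_eq_sum hξ hF hsum]
  exact coeff_sum_smul_X_pow_apply
    (cbarWeight_strictMono three_le (Nat.pos_of_ne_zero hs)).injective _ k

lemma IsWeaklyRegular.AbarCount_eq_zero (hPl : IsWeaklyRegular ξ (p * s) Pl ε D)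
    (hξ : IsPrimitiveRoot ξ p) (hF : Fintype.card F = (p * s) ^ 2)
    (hsum : ∑ a ∈ univ.erase 0, ε a = 0) {i : ℕ} (hi : i ∉ Set.range (cbarWeight p s)) :
    AbarCount p F Pl i = 0 := by
  rw [AbarCount_eq_coeff_weightEnumerator, hPl.weightEnumerator_eq_sum hξ hF hsum]
  exact coeff_sum_smul_X_pow_of_notMem_range _ hi

end Distribution

/-- the weight distribution of `C̄_Π` for `m` even, assuming `|Π⁻¹(0)| = 1`,
`Π` weakly regular perfect nonlinear (with signs `ε_a` and duals `Π_a*`) and the map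
`a ↦ Π_a*(0)` on `𝔽_q^*` not surjective onto `𝔽_p`. -/
theorem stmt_12 (p m : ℕ) [Fact p.Prime] (hp : Odd p) (hm : Even m) (hm0 : 0 < m)
    (F : Type*) [Field F] [Fintype F] [DecidableEq F] [Algebra (ZMod p) F]
    (hF : Fintype.card F = p ^ m)
    (ξ : ℂ) (hξ : IsPrimitiveRoot ξ p)
    (Pl : F → F)
    (hPN : ∀ a : F, a ≠ 0 → Function.Bijective (fun x : F => Pl (x + a) - Pl x))
    (hzero : (univ.filter (fun x : F => Pl x = 0)).card = 1)
    (ε : F → ℤ) (D : F → F → ZMod p)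
    (hwr : ∀ a : F, a ≠ 0 → (ε a = 1 ∨ ε a = -1) ∧
      ∀ y : F, ∑ x : F,
          ξ ^ (Algebra.trace (ZMod p) F (a * Pl x) + Algebra.trace (ZMod p) F (y * x)).val
        = (ε a : ℂ) * ξ ^ (D a y).val * Real.sqrt (p ^ m))
    (hnsurj : ∃ r : ZMod p, ∀ a : F, a ≠ 0 → D a 0 ≠ r) :
    AbarCount p F Pl 0 = 1 ∧
    AbarCount p F Pl ((p - 1) * (p ^ (m - 1) - p ^ (m / 2 - 1)))
      = p ^ m * (p ^ m - 1) / 2 ∧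
    AbarCount p F Pl ((p - 1) * p ^ (m - 1) - p ^ (m / 2 - 1))
      = p ^ m * (p ^ m - 1) * (p - 1) / 2 ∧
    AbarCount p F Pl ((p - 1) * p ^ (m - 1)) = p ^ (m + 1) - p ∧
    AbarCount p F Pl ((p - 1) * p ^ (m - 1) + p ^ (m / 2 - 1))
      = p ^ m * (p ^ m - 1) * (p - 1) / 2 ∧
    AbarCount p F Pl ((p - 1) * (p ^ (m - 1) + p ^ (m / 2 - 1)))
      = p ^ m * (p ^ m - 1) / 2 ∧
    AbarCount p F Pl (p ^ m) = p - 1 ∧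
    (∀ i : ℕ, i ∉ ({0, (p - 1) * (p ^ (m - 1) - p ^ (m / 2 - 1)),
        (p - 1) * p ^ (m - 1) - p ^ (m / 2 - 1), (p - 1) * p ^ (m - 1),
        (p - 1) * p ^ (m - 1) + p ^ (m / 2 - 1),
        (p - 1) * (p ^ (m - 1) + p ^ (m / 2 - 1)), p ^ m} : Set ℕ) →
      AbarCount p F Pl i = 0) := by
  obtain ⟨k, rfl⟩ : ∃ k, m = 2 * (k + 1) := by
    obtain ⟨k, rfl⟩ := hm
    exact ⟨k - 1, by omega⟩
  have hq : p ^ (2 * (k + 1)) = (p * p ^ k) ^ 2 := by ring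
  have hsqrt : √((p : ℝ) ^ (2 * (k + 1))) = p * p ^ k := by
    rw [mul_comm 2, pow_mul, Real.sqrt_sq (by positivity), pow_succ']
  have hPl : IsWeaklyRegular ξ (p * p ^ k) Pl ε D :=
    ⟨fun a ha => (hwr a ha).1, fun a ha y =>
      ((hwr a ha).2 y).trans (by rw [hsqrt]; push_cast; ring)⟩
  obtain ⟨c, hc⟩ := hnsurj
  have hsum := hPl.sum_sign_eq_zero hξ (by simp [NeZero.ne p]) hzero hc
  have count := hPl.AbarCount_cbarWeight hξ hp (hF.trans hq) hsum
  rw [hF] at count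
  rw [show p ^ (2 * (k + 1) - 1) = p * (p ^ k) ^ 2 by rw [← pow_mul', ← pow_succ']; congr 1,
    show 2 * (k + 1) / 2 - 1 = k by omega,
    show p ^ (2 * (k + 1) + 1) - p = p * (p ^ (2 * (k + 1)) - 1) by
      rw [Nat.mul_sub_one, pow_succ']]
  refine ⟨count 0, count 1, count 2, count 3, count 4, count 5, hq ▸ count 6, fun i hi =>
    hPl.AbarCount_eq_zero hξ (hF.trans hq) hsum ?_⟩
  simpa only [cbarWeight, ← hq, Matrix.range_cons, Matrix.range_empty, Set.union_empty,
    Set.singleton_union] using hi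
end

section
/- Let p be an odd prime, m odd, q = p^m, and Π : 𝔽_q → 𝔽_q perfect nonlinear with Π(0) = 0 and Π(cx) ≠ cΠ(x) for all x ∈ 𝔽_q^* and c ∈ 𝔽_p \ {0,1}. Then the weight distribution of the code C_Π = {(Tr(aΠ(x)+bx))_{x∈𝔽_q^*} : a,b ∈ 𝔽_q} is: A_0 = 1, A_{(p−1)p^{m−1}−p^{(m−1)/2}} = (p−1)(p^m−1)(p^{m−1}+p^{(m−1)/2})/2, A_{(p−1)p^{m−1}} = (p^{m−1}+1)(p^m−1), A_{(p−1)p^{m−1}+p^{(m−1)/2}} = (p−1)(p^m−1)(p^{m−1}−p^{(m−1)/2})/2, and A_i = 0 otherwise. -/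
open Finset

/-- The code `C_Π = {(Tr(aΠ(x)+bx))_{x∈𝔽_q^*} : a,b ∈ 𝔽_q}` as a set of words indexed by
the nonzero elements of `𝔽_q`. -/
def CCode (p : ℕ) [Fact p.Prime] (F : Type*) [Field F] [Fintype F]
    [Algebra (ZMod p) F] (Pl : F → F) : Set ({x : F // x ≠ 0} → ZMod p) :=
  {g | ∃ a b : F, g = fun x => Algebra.trace (ZMod p) F (a * Pl x.1 + b * x.1)}

/-- Hamming weight of a word of length `q - 1`. -/
def wtC (p : ℕ) [Fact p.Prime] (F : Type*) [Field F] [Fintype F] [DecidableEq F]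
    (g : {x : F // x ≠ 0} → ZMod p) : ℕ :=
  (Finset.univ.filter (fun x : {x : F // x ≠ 0} => g x ≠ 0)).card

/-- Number of codewords of `C_Π` of Hamming weight `i`. -/
noncomputable def ACount (p : ℕ) [Fact p.Prime] (F : Type*) [Field F] [Fintype F]
    [DecidableEq F] [Algebra (ZMod p) F] (Pl : F → F) (i : ℕ) : ℕ :=
  Nat.card {g : {x : F // x ≠ 0} → ZMod p | g ∈ CCode p F Pl ∧ wtC p F g = i}

/-!
For nonzero `(a, b)` the map `aΠ(x) + bx` is either linear and nonzero or again perfect nonlinear.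
In the second case its character sum `W` over `𝔽_q` satisfies `W W̄ = q = p ^ (2M + 1)`, so the
product of `W` with the quadratic Gauss sum has absolute value `p ^ (M + 1)`. It lies in `ℤ[ζ_p]`,
where `p` is totally ramified, so it is a unit times `p ^ (M + 1)`, and by Kronecker's theorem the
unit is `± ζ_p ^ r`. Hence each value of `Tr(aΠ(x) + bx)` is taken `p ^ (2M)` or
`p ^ (2M) ± p ^ M` times, which leaves three nonzero weights.

The homogeneity condition on `Π` says that any two coordinates `(a, b) ↦ Tr(aΠ(x) + bx)` are
linearly independent functionals, hence independent random variables when `(a, b)` is uniformly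
distributed. The first two moments of the weight are therefore known, and they determine the
frequencies of the three weights.
-/

/-- A map `f` between groups is perfect nonlinear if each of its difference functions
`x ↦ f (x + a) - f x` with `a ≠ 0` is a bijection. -/
def IsPerfectNonlinear {G H : Type*} [AddGroup G] [AddGroup H] (f : G → H) : Prop :=
  ∀ a, a ≠ 0 → Function.Bijective (fun x ↦ f (x + a) - f x)

namespace IsPerfectNonlinear

lemma const_mul_add_const_mul {F : Type*} [DivisionRing F] {f : F → F} (hf : IsPerfectNonlinear f)
    {a : F} (ha : a ≠ 0) (b : F) : IsPerfectNonlinear (fun x ↦ a * f x + b * x) := by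
  intro d hd
  convert ((Equiv.addRight (b * d)).bijective.comp (Equiv.mulLeft₀ a ha).bijective).comp (hf d hd)
    using 2 with x
  change _ = a * (f (x + d) - f x) + b * d
  noncomm_ring

variable {G H : Type*} [AddGroup G] [Fintype G] [AddGroup H] {f : G → H}

lemma sum_addChar_mul_sum_addChar_neg (hf : IsPerfectNonlinear f) {R : Type*} [CommRing R]
    [IsDomain R] {Ψ : AddChar H R} (hΨ : Ψ ≠ 1) :
    (∑ x, Ψ (f x)) * ∑ x, Ψ (-f x) = Fintype.card G := by
  have hdiff {d : G} (hd : d ≠ 0) : ∑ y, Ψ (f (y + d) - f y) = 0 := by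
    have := Fintype.ofBijective _ (hf d hd)
    rw [(hf d hd).sum_comp Ψ, AddChar.sum_eq_zero_of_ne_one hΨ]
  calc (∑ x, Ψ (f x)) * ∑ x, Ψ (-f x) = ∑ y, ∑ x, Ψ (f x - f y) := by
        simp only [sum_mul_sum, sub_eq_add_neg, AddChar.map_add_eq_mul]
        exact sum_comm
    _ = ∑ d, ∑ y, Ψ (f (y + d) - f y) := by
        rw [sum_comm (s := univ (α := G)) (f := fun d y ↦ Ψ (f (y + d) - f y))]
        exact sum_congr rfl fun y _ ↦
          (Equiv.sum_comp (Equiv.addLeft y) fun x ↦ Ψ (f x - f y)).symm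
    _ = ∑ y, Ψ (f (y + 0) - f y) := Fintype.sum_eq_single 0 fun d hd ↦ hdiff hd
    _ = Fintype.card G := by simp

end IsPerfectNonlinear

lemma two_lt_of_odd {p : ℕ} [Fact p.Prime] (hp : Odd p) : 2 < p :=
  (Fact.out : p.Prime).two_le.lt_of_ne (by rintro rfl; exact absurd hp (by decide))

section CyclotomicIntegers

open NumberField IsCMField

variable {p : ℕ} [Fact p.Prime] {K : Type*} [Field K] [NumberField K]

/- The prime `ζ - 1` is the only one above `p`, so it is the only one dividing `α`, and every
automorphism fixes it up to a unit. -/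
lemma associated_natCast_pow_of_mul_map_eq [IsCyclotomicExtension {p} ℚ K] (σ : 𝓞 K ≃+* 𝓞 K)
    {α : 𝓞 K} {j : ℕ} (hα : α * σ α = (p : 𝓞 K) ^ (2 * j)) : Associated α ((p : 𝓞 K) ^ j) := by
  have hζ := IsCyclotomicExtension.zeta_spec p ℚ K
  set π : 𝓞 K := hζ.toInteger - 1 with hπ
  have hπ_prime : Prime π := hζ.zeta_sub_one_prime'
  have hp : Associated (π ^ (p - 1)) (p : 𝓞 K) :=
    IsCyclotomicExtension.Rat.associated_zeta_sub_one_pow_prime p hζ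
  have hσπ : Associated (σ π) π := by
    have hσζ := (hζ.toInteger_isPrimitiveRoot.map_of_injective σ.injective).map_of_injective
      RingOfIntegers.coe_injective
    simpa only [hπ, map_sub, map_one] using!
      (IsCyclotomicExtension.Rat.associated_sub_one_of_isPrimitiveRoot p hζ hσζ).symm
  have hp_pow (n : ℕ) : Associated (π ^ ((p - 1) * n)) ((p : 𝓞 K) ^ n) := by
    simpa only [pow_mul] using hp.pow_pow
  obtain ⟨i, -, hi⟩ : ∃ i ≤ (p - 1) * (2 * j), Associated α (π ^ i) :=
    (dvd_prime_pow hπ_prime _).1 <|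
      (hp_pow _).dvd_iff_dvd_right.2 <| hα ▸ dvd_mul_right α (σ α)
  have hσi : Associated (σ α) (π ^ i) := by
    simpa only [map_pow] using (hi.map σ).trans (by simpa only [map_pow] using hσπ.pow_pow)
  have hexp : i + i = (p - 1) * (2 * j) := by
    have hπi : Associated (π ^ (i + i)) (π ^ ((p - 1) * (2 * j))) := by
      rw [pow_add]
      exact (hi.mul_mul hσi).symm.trans (hα ▸ (hp_pow _).symm)
    have hle {m n : ℕ} : π ^ m ∣ π ^ n ↔ m ≤ n :=
      pow_dvd_pow_iff hπ_prime.ne_zero hπ_prime.not_isUnit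
    exact le_antisymm (hle.1 hπi.dvd) (hle.1 hπi.symm.dvd)
  have : i = (p - 1) * j := by linarith
  exact hi.trans (this ▸ hp_pow j)

variable [IsCMField K]

lemma isOfFinOrder_of_mul_complexConj_eq_one {u : K} (hu : IsIntegral ℤ u)
    (h : u * complexConj K u = 1) : IsOfFinOrder u := by
  have hnorm (φ : K →+* ℂ) : ‖φ u‖ = 1 := by
    have hsq : ‖φ u‖ * ‖φ u‖ = 1 := by
      simpa only [map_mul, complexEmbedding_complexConj, norm_mul, RCLike.norm_conj, map_one,
        norm_one] using congrArg (‖φ ·‖) h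
    nlinarith [norm_nonneg (φ u)]
  obtain ⟨n, hn, hun⟩ := Embeddings.pow_eq_one_of_norm_eq_one K ℂ hu hnorm
  exact isOfFinOrder_iff_pow_eq_one.2 ⟨n, hn, hun⟩

lemma isPrimitiveRoot_addChar_one {R : Type*} [CommRing R] {ψ : AddChar (ZMod p) R}
    (hψ : ψ.IsPrimitive) : IsPrimitiveRoot (ψ 1) p := by
  have hpow (k : ℕ) : ψ 1 ^ k = ψ k := by rw [← AddChar.map_nsmul_eq_pow, nsmul_one]
  refine ⟨by simp [hpow], fun k hk ↦ ?_⟩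
  rwa [hpow, hψ.zmod_char_eq_one_iff, ZMod.natCast_eq_zero_iff] at hk

lemma complexConj_addChar_apply {G : Type*} [AddCommGroup G] [Finite G] (ψ : AddChar G K)
    (c : G) : complexConj K (ψ c) = ψ (-c) := by
  obtain ⟨φ⟩ : Nonempty (K →+* ℂ) := inferInstance
  apply φ.injective
  rw [complexEmbedding_complexConj]
  exact ((φ.toMonoidHom.compAddChar ψ).map_neg_eq_conj c).symm

lemma exists_eq_addChar_mul_pow_of_mul_complexConj_eq [IsCyclotomicExtension {p} ℚ K]
    (hp : Odd p) {ψ : AddChar (ZMod p) K} (hψ : ψ.IsPrimitive) {α : K} (hα : IsIntegral ℤ α)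
    {j : ℕ} (h : α * complexConj K α = (p : K) ^ (2 * j)) :
    ∃ (r : ZMod p) (ε : ℤˣ), α = ε * ψ r * (p : K) ^ j := by
  obtain ⟨α, rfl⟩ : ∃ a : 𝓞 K, (a : K) = α := ⟨⟨α, hα⟩, rfl⟩
  obtain ⟨u, hu⟩ : Associated ((p : 𝓞 K) ^ j) α :=
    (associated_natCast_pow_of_mul_map_eq (ringOfIntegersComplexConj K).toRingEquiv
      (RingOfIntegers.ext (by simpa using h))).symm
  have hαu : (α : K) = u * (p : K) ^ j := by rw [← hu, mul_comm]; simp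
  have hp0 : (p : K) ≠ 0 := Nat.cast_ne_zero.2 hp.pos.ne'
  have huu : (u : K) * complexConj K u = 1 := by
    rw [hαu, map_mul, map_pow, map_natCast, mul_mul_mul_comm, ← pow_add, ← two_mul] at h
    exact (mul_eq_right₀ (pow_ne_zero _ hp0)).1 h
  obtain ⟨r, -, hr⟩ :=
    (isPrimitiveRoot_addChar_one hψ).exists_pow_or_neg_mul_pow_of_isOfFinOrder hp
      (isOfFinOrder_of_mul_complexConj_eq_one (RingOfIntegers.isIntegral_coe _) huu)
  rw [← AddChar.map_nsmul_eq_pow, nsmul_one] at hr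
  rcases hr with hr | hr
  · exact ⟨r, 1, by rw [hαu, hr]; simp⟩
  · exact ⟨r, -1, by rw [hαu, hr]; simp⟩

lemma isIntegral_sum_intCast_mul_addChar {R : Type*} [CommRing R] (ψ : AddChar (ZMod p) R)
    (a : ZMod p → ℤ) : IsIntegral ℤ (∑ c, (a c : R) * ψ c) := by
  have hψ (c : ZMod p) : IsIntegral ℤ (ψ c) :=
    .of_pow (Fact.out : p.Prime).pos (by
      rw [← AddChar.map_nsmul_eq_pow, nsmul_eq_mul, CharP.cast_eq_zero, zero_mul,
        AddChar.map_zero_eq_one]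
      exact isIntegral_one)
  exact .sum _ fun c _ ↦ (isIntegral_algebraMap (x := a c)).mul (hψ c)

lemma eq_of_sum_intCast_mul_addChar_eq_zero {L : Type*} [Field L] [CharZero L]
    {ψ : AddChar (ZMod p) L} (hψ : ψ.IsPrimitive) {a : ZMod p → ℤ}
    (ha : ∑ c, (a c : L) * ψ c = 0) (c d : ZMod p) : a c = a d := by
  let e : Fin p ≃ ZMod p :=
    { toFun i := (i.val : ZMod p)
      invFun c := ⟨c.val, c.val_lt⟩
      left_inv i := Fin.ext (ZMod.val_cast_of_lt i.isLt)
      right_inv := ZMod.natCast_zmod_val }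
  have he (i : Fin p) : ψ 1 ^ i.val = ψ (e i) := by
    rw [← AddChar.map_nsmul_eq_pow, nsmul_one]
    rfl
  have h := (isPrimitiveRoot_addChar_one hψ).sum_eq_zero_iff_forall_eq_int Fact.out (a ∘ e)
  simp only [he, Function.comp_apply, e.sum_comp fun c ↦ (a c : L) * ψ c] at h
  simpa only [Equiv.apply_symm_apply] using h.1 ha (e.symm c) (e.symm d)

lemma ringChar_zmod_ne_two (hp : Odd p) : ringChar (ZMod p) ≠ 2 :=
  (ZMod.ringChar_zmod_n p).trans_ne (two_lt_of_odd hp).ne'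

lemma quadraticChar_ringHomComp_ne_one (hp : Odd p) {R : Type*} [CommRing R] [CharZero R] :
    (quadraticChar (ZMod p)).ringHomComp (Int.castRingHom R) ≠ 1 := by
  rw [MulChar.ringHomComp_ne_one_iff (RingHom.injective_int _)]
  exact quadraticChar_ne_one (ringChar_zmod_ne_two hp)

lemma gaussSum_quadraticChar_mul_complexConj (hp : Odd p) {ψ : AddChar (ZMod p) K}
    (hψ : ψ.IsPrimitive) :
    let χ := (quadraticChar (ZMod p)).ringHomComp (Int.castRingHom K)
    gaussSum χ ψ * complexConj K (gaussSum χ ψ) = p := by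
  intro χ
  have hconj : complexConj K (gaussSum χ ψ) = gaussSum χ⁻¹ ψ⁻¹ := by
    rw [((quadraticChar_isQuadratic (ZMod p)).comp _).inv]
    simp [gaussSum, χ, complexConj_addChar_apply, AddChar.inv_apply]
  rw [hconj, gaussSum_mul_gaussSum_eq_card (quadraticChar_ringHomComp_ne_one hp) hψ, ZMod.card]

/- Multiplying by the quadratic Gauss sum, whose absolute value is `√p`, turns the odd power of `p`
into an even one. -/
lemma exists_eq_add_mul_quadraticChar [IsCyclotomicExtension {p} ℚ K] (hp : Odd p)
    {ψ : AddChar (ZMod p) K} (hψ : ψ.IsPrimitive) {N : ZMod p → ℤ} {M : ℕ}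
    (hN : (∑ c, (N c : K) * ψ c) * ∑ c, (N c : K) * ψ (-c) = (p : K) ^ (2 * M + 1)) :
    ∃ (k : ℤ) (ε : ℤˣ) (r : ZMod p),
      ∀ c, N c = k + ε * p ^ M * quadraticChar (ZMod p) (r - c) := by
  set χ := (quadraticChar (ZMod p)).ringHomComp (Int.castRingHom K)
  set W := ∑ c, (N c : K) * ψ c with hW
  set G := gaussSum χ ψ
  have hGG : G * complexConj K G = p := gaussSum_quadraticChar_mul_complexConj hp hψ
  have hWW : W * complexConj K W = (p : K) ^ (2 * M + 1) := by
    simpa only [hW, map_sum, map_mul, map_intCast, complexConj_addChar_apply] using hN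
  obtain ⟨r, ε, hWG⟩ : ∃ (r : ZMod p) (ε : ℤˣ), W * G = ε * ψ r * (p : K) ^ (M + 1) := by
    refine exists_eq_addChar_mul_pow_of_mul_complexConj_eq hp hψ ?_ ?_
    · exact (isIntegral_sum_intCast_mul_addChar ψ N).mul
        (isIntegral_sum_intCast_mul_addChar ψ (quadraticChar (ZMod p)))
    · rw [map_mul, mul_mul_mul_comm, hWW, hGG]
      ring
  have hW_eq : W = ∑ c, ((ε * p ^ M * quadraticChar (ZMod p) (r - c) : ℤ) : K) * ψ c := by
    have hp0 : (p : K) ≠ 0 := Nat.cast_ne_zero.2 hp.pos.ne'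
    have h : W = ε * p ^ M * (ψ r * complexConj K G) := by
      apply mul_right_cancel₀ hp0
      linear_combination complexConj K G * hWG - W * hGG
    rw [h, ← (Equiv.subLeft r).sum_comp]
    simp [G, gaussSum, χ, complexConj_addChar_apply, mul_sum, sub_eq_add_neg,
      AddChar.map_add_eq_mul, mul_assoc, mul_left_comm]
  refine ⟨N 0 - ε * p ^ M * quadraticChar (ZMod p) (r - 0), ε, r, fun c ↦ ?_⟩
  have h := eq_of_sum_intCast_mul_addChar_eq_zero hψ
    (a := fun c ↦ N c - ε * p ^ M * quadraticChar (ZMod p) (r - c))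
    (by simpa only [Int.cast_sub, sub_mul, sum_sub_distrib, sub_eq_zero] using hW_eq) c 0
  linarith

end CyclotomicIntegers

section Fibers

variable {p : ℕ} [Fact p.Prime]

lemma sub_pow_mem_of_sum_mul_addChar (hp : Odd p) {M : ℕ} {N : ZMod p → ℤ}
    (hsum : ∑ c, N c = p ^ (2 * M + 1)) {K : Type*} [Field K] [NumberField K]
    [NumberField.IsCMField K] [IsCyclotomicExtension {p} ℚ K] {ψ : AddChar (ZMod p) K}
    (hψ : ψ.IsPrimitive)
    (hN : (∑ c, (N c : K) * ψ c) * ∑ c, (N c : K) * ψ (-c) = (p : K) ^ (2 * M + 1)) (c : ZMod p) :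
    N c - p ^ (2 * M) ∈ ({0, (p : ℤ) ^ M, -(p : ℤ) ^ M} : Set ℤ) := by
  obtain ⟨k, ε, r, hN⟩ := exists_eq_add_mul_quadraticChar hp hψ hN
  have hk : k = p ^ (2 * M) := by
    have hχ : ∑ c, quadraticChar (ZMod p) (r - c) = 0 := by
      exact ((Equiv.subLeft r).sum_comp (quadraticChar (ZMod p))).trans <|
        quadraticChar_sum_zero (ringChar_zmod_ne_two hp)
    have hp0 : (p : ℤ) ≠ 0 := Nat.cast_ne_zero.2 hp.pos.ne'
    simp only [hN, sum_add_distrib, ← mul_sum, hχ, sum_const, card_univ, ZMod.card] at hsum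
    exact mul_left_cancel₀ hp0 (by simpa [pow_succ'] using hsum)
  rw [hN, hk, add_sub_cancel_left]
  rcases Int.units_eq_one_or ε with rfl | rfl <;>
    rcases quadraticChar_isQuadratic (ZMod p) (r - c) with h | h | h <;> rw [h] <;> simp

lemma IsPerfectNonlinear.card_fiber_sub_pow_mem (hp : Odd p) {G H : Type*} [AddGroup G] [Fintype G]
    [AddGroup H] {f : G → H} (hf : IsPerfectNonlinear f) {M : ℕ}
    (hG : Fintype.card G = p ^ (2 * M + 1)) {ℓ : H →+ ZMod p} (hℓ : Function.Surjective ℓ)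
    (c : ZMod p) :
    (#{x | ℓ (f x) = c} : ℤ) - p ^ (2 * M) ∈ ({0, (p : ℤ) ^ M, -(p : ℤ) ^ M} : Set ℤ) := by
  let K := CyclotomicField p ℚ
  have : NeZero ((p : ℕ) : ℚ) := ⟨Nat.cast_ne_zero.2 hp.pos.ne'⟩
  have hcyc : IsCyclotomicExtension {p} ℚ K := CyclotomicField.isCyclotomicExtension p ℚ
  have hp2 : 2 < p := two_lt_of_odd hp
  have : NumberField.IsCMField K := IsCyclotomicExtension.Rat.isCMField K (S := {p}) ⟨p, rfl, hp2⟩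
  have hζ := IsCyclotomicExtension.zeta_spec p ℚ K
  let ψ : AddChar (ZMod p) K := AddChar.zmodChar p hζ.pow_eq_one
  have hψ : ψ.IsPrimitive := AddChar.zmodChar_primitive_of_primitive_root p hζ
  have hsum (g : ZMod p → K) : ∑ c, ((#{x | ℓ (f x) = c} : ℤ) : K) * g c = ∑ x, g (ℓ (f x)) := by
    rw [← sum_fiberwise' univ (fun x ↦ ℓ (f x))]
    simp
  refine sub_pow_mem_of_sum_mul_addChar (N := fun c ↦ #{x | ℓ (f x) = c}) hp ?_ hψ ?_ c
  · rw [← Nat.cast_sum, ← card_eq_sum_card_fiberwise fun _ _ ↦ mem_univ _, card_univ, hG,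
      Nat.cast_pow]
  · have hψℓ : ψ.compAddMonoidHom ℓ ≠ 1 := by
      intro h
      obtain ⟨y, hy⟩ := hℓ 1
      have h1 : ψ 1 = 1 := by simpa [hy] using DFunLike.congr_fun h y
      exact one_ne_zero ((hψ.zmod_char_eq_one_iff p 1).1 h1)
    rw [hsum, hsum fun c ↦ ψ (-c)]
    simpa [hG] using hf.sum_addChar_mul_sum_addChar_neg hψℓ

end Fibers

section Functionals

open Module

variable {k V : Type*} [Field k] [Fintype k] [AddCommGroup V] [Module k V] [Fintype V]

lemma card_filter_forall_eq_zero_mul_pow [DecidableEq k] {ι : Type*} [Fintype ι]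
    {f : ι → Dual k V} (hf : LinearIndependent k f) :
    #{v | ∀ i, f i v = 0} * Fintype.card k ^ Fintype.card ι = Fintype.card V := by
  have hzeros : #{v | ∀ i, f i v = 0} =
      Nat.card (Submodule.span k (Set.range f)).dualCoannihilator := by
    rw [← Fintype.card_subtype, ← Nat.card_eq_fintype_card]
    refine Nat.card_congr (Equiv.subtypeEquivRight fun v ↦ ?_)
    rw [← SetLike.mem_coe, Submodule.coe_dualCoannihilator_span]
    simp
  rw [hzeros, natCard_eq_pow_finrank (K := k), card_eq_pow_finrank (K := k) (V := V),
    Nat.card_eq_fintype_card, ← pow_add, ← finrank_span_eq_card hf, add_comm,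
    Subspace.finrank_add_finrank_dualCoannihilator_eq]

variable [DecidableEq k] {f g : Dual k V}

lemma card_filter_eq_zero_mul_card (hf : f ≠ 0) :
    #{v | f v = 0} * Fintype.card k = Fintype.card V := by
  simpa using
    card_filter_forall_eq_zero_mul_pow (LinearIndependent.of_subsingleton (v := ![f]) 0 hf)

lemma card_filter_eq_zero_and_eq_zero_mul_sq (h : LinearIndependent k ![f, g]) :
    #{v | f v = 0 ∧ g v = 0} * Fintype.card k ^ 2 = Fintype.card V := by
  simpa using card_filter_forall_eq_zero_mul_pow h

/-- The indicator function of the kernel of `f`, scaled and shifted so as to take the value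
`|k| - 1` on the kernel and `-1` off it; it then sums to zero over `V`. -/
def centredKerIndicator (f : Dual k V) (v : V) : ℤ :=
  Fintype.card k * (if f v = 0 then 1 else 0) - 1

lemma sum_centredKerIndicator (hf : f ≠ 0) : ∑ v, centredKerIndicator f v = 0 := by
  have h := card_filter_eq_zero_mul_card hf
  zify at h
  simp only [centredKerIndicator, sum_sub_distrib, ← mul_sum, sum_boole, sum_const, card_univ,
    nsmul_one]
  linear_combination h

lemma sum_centredKerIndicator_mul_eq_zero (h : LinearIndependent k ![f, g]) :
    ∑ v, centredKerIndicator f v * centredKerIndicator g v = 0 := by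
  have hfg := card_filter_eq_zero_and_eq_zero_mul_sq h
  have hf0 : f ≠ 0 := h.ne_zero 0
  have hg0 : g ≠ 0 := h.ne_zero 1
  have hg := card_filter_eq_zero_mul_card hg0
  zify at hfg hg
  have hexpand (v : V) : centredKerIndicator f v * centredKerIndicator g v =
      Fintype.card k ^ 2 * (if f v = 0 ∧ g v = 0 then 1 else 0) -
      Fintype.card k * (if g v = 0 then 1 else 0) - centredKerIndicator f v := by
    simp only [centredKerIndicator]
    split_ifs <;> grind
  simp only [hexpand, sum_sub_distrib, ← mul_sum, sum_boole,
    sum_centredKerIndicator hf0]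
  linear_combination hfg - hg

lemma sum_centredKerIndicator_sq (hf : f ≠ 0) :
    ∑ v, centredKerIndicator f v ^ 2 = (Fintype.card k - 1) * Fintype.card V := by
  have hexpand (v : V) : centredKerIndicator f v ^ 2 =
      (Fintype.card k - 2) * centredKerIndicator f v + (Fintype.card k - 1) := by
    unfold centredKerIndicator
    split_ifs <;> ring
  simp only [hexpand, sum_add_distrib, ← mul_sum, sum_centredKerIndicator hf, sum_const, card_univ,
    nsmul_eq_mul]
  ring

end Functionals

section Codes

open Module

variable {k V X : Type*} [Field k] [Fintype k] [DecidableEq k] [AddCommGroup V] [Module k V]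
  [Fintype X] {φ : X → Dual k V}

lemma sum_centredKerIndicator_eq_sub_hammingNorm (φ : X → Dual k V) (v : V) :
    ∑ x, centredKerIndicator (φ x) v =
      (Fintype.card k - 1) * Fintype.card X - Fintype.card k * hammingNorm (fun x ↦ φ x v) := by
  have h : (#{x | φ x v = 0} : ℤ) + hammingNorm (fun x ↦ φ x v) = Fintype.card X := by
    rw [hammingNorm, ← Nat.cast_add, card_filter_add_card_filter_not, card_univ]
  simp only [centredKerIndicator, sum_sub_distrib, ← mul_sum, sum_boole, sum_const, card_univ,
    nsmul_one]
  linear_combination (Fintype.card k : ℤ) * h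

/-- For the word `(φ x v)_x` lengthened by one zero coordinate, the number of its zeros times `|k|`
minus its length. -/
def zeroExcess (φ : X → Dual k V) (v : V) : ℤ :=
  (Fintype.card k - 1) * (Fintype.card X + 1) - Fintype.card k * hammingNorm (fun x ↦ φ x v)

lemma zeroExcess_zero (φ : X → Dual k V) :
    zeroExcess φ 0 = (Fintype.card k - 1) * (Fintype.card X + 1) := by
  simp [zeroExcess, ← Pi.zero_def]

lemma zeroExcess_eq_sum_centredKerIndicator_add (φ : X → Dual k V) (v : V) :
    zeroExcess φ v = ∑ x, centredKerIndicator (φ x) v + (Fintype.card k - 1) := by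
  rw [zeroExcess, sum_centredKerIndicator_eq_sub_hammingNorm]
  ring

variable [Fintype V]

lemma sum_sum_centredKerIndicator_sq (hφ : ∀ x, φ x ≠ 0)
    (hφ₂ : Pairwise fun x y ↦ LinearIndependent k ![φ x, φ y]) :
    ∑ v, (∑ x, centredKerIndicator (φ x) v) ^ 2 =
      (Fintype.card k - 1) * Fintype.card X * Fintype.card V := by
  calc ∑ v, (∑ x, centredKerIndicator (φ x) v) ^ 2
      = ∑ x, ∑ y, ∑ v, centredKerIndicator (φ x) v * centredKerIndicator (φ y) v := by
        simp only [sq, sum_mul_sum]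
        rw [sum_comm]
        exact sum_congr rfl fun x _ ↦ sum_comm
    _ = ∑ x, ∑ v, centredKerIndicator (φ x) v ^ 2 := by
        refine sum_congr rfl fun x _ ↦ ?_
        rw [Fintype.sum_eq_single x fun y hy ↦ sum_centredKerIndicator_mul_eq_zero (hφ₂ hy.symm)]
        simp only [sq]
    _ = (Fintype.card k - 1) * Fintype.card X * Fintype.card V := by
        simp only [sum_centredKerIndicator_sq (hφ _), sum_const, card_univ, nsmul_eq_mul]
        ring

lemma sum_sum_centredKerIndicator (hφ : ∀ x, φ x ≠ 0) :
    ∑ v, ∑ x, centredKerIndicator (φ x) v = 0 := by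
  rw [sum_comm]
  exact sum_eq_zero fun x _ ↦ sum_centredKerIndicator (hφ x)

lemma sum_zeroExcess (hφ : ∀ x, φ x ≠ 0) :
    ∑ v, zeroExcess φ v = (Fintype.card k - 1) * Fintype.card V := by
  simp only [zeroExcess_eq_sum_centredKerIndicator_add, sum_add_distrib,
    sum_sum_centredKerIndicator hφ, sum_const, card_univ, nsmul_eq_mul]
  ring

lemma sum_zeroExcess_sq (hφ : ∀ x, φ x ≠ 0)
    (hφ₂ : Pairwise fun x y ↦ LinearIndependent k ![φ x, φ y]) :
    ∑ v, zeroExcess φ v ^ 2 =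
      (Fintype.card k - 1) * (Fintype.card X + Fintype.card k - 1) * Fintype.card V := by
  simp only [zeroExcess_eq_sum_centredKerIndicator_add, add_sq, sum_add_distrib, ← mul_sum,
    ← sum_mul, sum_sum_centredKerIndicator hφ, sum_sum_centredKerIndicator_sq hφ hφ₂, sum_const,
    card_univ, nsmul_eq_mul]
  ring

lemma two_mul_sq_mul_card_filter_eq {ι : Type*} {s : Finset ι} {f : ι → ℤ} {T : ℤ} (hT : T ≠ 0)
    (hf : ∀ i ∈ s, f i ∈ ({0, T, -T} : Set ℤ)) :
    2 * T ^ 2 * #{i ∈ s | f i = T} = ∑ i ∈ s, f i ^ 2 + T * ∑ i ∈ s, f i := by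
  rw [← sum_boole, mul_sum, mul_sum, ← sum_add_distrib]
  refine sum_congr rfl fun i hi ↦ ?_
  rcases hf i hi with h | h | h <;> rw [h] <;> grind

lemma sq_mul_card_filter_eq_zero {ι : Type*} {s : Finset ι} {f : ι → ℤ} {T : ℤ}
    (hf : ∀ i ∈ s, f i ∈ ({0, T, -T} : Set ℤ)) :
    T ^ 2 * #{i ∈ s | f i = 0} = T ^ 2 * #s - ∑ i ∈ s, f i ^ 2 := by
  rw [← sum_boole, mul_sum, card_eq_sum_ones, Nat.cast_sum, mul_sum, ← sum_sub_distrib]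
  refine sum_congr rfl fun i hi ↦ ?_
  rcases hf i hi with h | h | h <;> rw [h] <;> split_ifs <;> simp_all

section ThreeWeights

variable [DecidableEq V] (hφ : ∀ x, φ x ≠ 0)
  (hφ₂ : Pairwise fun x y ↦ LinearIndependent k ![φ x, φ y])
  (hV : Fintype.card V = (Fintype.card X + 1) ^ 2)
include hφ hV

lemma sum_erase_zeroExcess : ∑ v ∈ univ.erase 0, zeroExcess φ v =
    (Fintype.card k - 1) * Fintype.card X * (Fintype.card X + 1) := by
  rw [sum_erase_eq_sub (mem_univ _), sum_zeroExcess hφ, zeroExcess_zero, hV]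
  push_cast
  ring

include hφ₂

lemma sum_erase_zeroExcess_sq : ∑ v ∈ univ.erase 0, zeroExcess φ v ^ 2 =
    (Fintype.card k - 1) * Fintype.card X * (Fintype.card X + 1) ^ 2 := by
  rw [sum_erase_eq_sub (mem_univ _), sum_zeroExcess_sq hφ hφ₂, zeroExcess_zero, hV]
  push_cast
  ring

variable {T : ℤ} (hT : T ^ 2 = Fintype.card k * (Fintype.card X + 1))
  (hφT : ∀ v ≠ 0, zeroExcess φ v ∈ ({0, T, -T} : Set ℤ))
include hT hφT

lemma two_mul_card_mul_card_filter_zeroExcess_eq :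
    2 * Fintype.card k * #{v | v ≠ 0 ∧ zeroExcess φ v = T} =
      (Fintype.card k - 1) * Fintype.card X * (Fintype.card X + 1 + T) := by
  have hn : (Fintype.card X + 1 : ℤ) ≠ 0 := by positivity
  have hT0 : T ≠ 0 := by
    have : 0 < T ^ 2 := hT ▸ by positivity
    exact pow_ne_zero_iff two_ne_zero |>.1 this.ne'
  have h := two_mul_sq_mul_card_filter_eq (s := univ.erase 0) hT0
    fun v hv ↦ hφT v (ne_of_mem_erase hv)
  rw [sum_erase_zeroExcess hφ hV, sum_erase_zeroExcess_sq hφ hφ₂ hV, hT, ← filter_ne',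
    filter_filter] at h
  apply mul_left_cancel₀ hn
  linear_combination h

lemma card_mul_card_filter_zeroExcess_eq_zero :
    Fintype.card k * #{v | v ≠ 0 ∧ zeroExcess φ v = 0} =
      Fintype.card X * (Fintype.card X + 1 + Fintype.card k) := by
  have hn : (Fintype.card X + 1 : ℤ) ≠ 0 := by positivity
  have h := sq_mul_card_filter_eq_zero (s := univ.erase 0)
    fun v hv ↦ hφT v (ne_of_mem_erase hv)
  rw [sum_erase_zeroExcess_sq hφ hφ₂ hV, hT, card_erase_of_mem (mem_univ _), card_univ, hV,
    ← filter_ne', filter_filter, Nat.cast_sub (Nat.one_le_pow' _ _)] at h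
  apply Nat.cast_injective (R := ℤ)
  apply mul_left_cancel₀ hn
  push_cast at h ⊢
  linear_combination h

end ThreeWeights

end Codes

lemma card_ne_zero_add_one {α : Type*} [Zero α] [Fintype α] [DecidableEq α] :
    Fintype.card {x : α // x ≠ 0} + 1 = Fintype.card α := by
  rw [Fintype.card_subtype_compl, Fintype.card_subtype_eq, Nat.sub_add_cancel Fintype.card_pos]

lemma card_prod_self_eq_sq {α : Type*} [Zero α] [Fintype α] [DecidableEq α] :
    Fintype.card (α × α) = (Fintype.card {x : α // x ≠ 0} + 1) ^ 2 := by
  rw [Fintype.card_prod, card_ne_zero_add_one, sq]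

section TraceCode

open Module

variable {k F : Type*} [Field k] [Field F] [Algebra k F]

variable (k F) in
/-- The pairing `⟨u, v⟩ ↦ Tr(u₁ v₁ + u₂ v₂)` on `F × F`, as a map to the dual space. The codeword of
`C_Π` with parameters `v = (a, b)` has the coordinates `tracePairing k F (Π x, x) v`. -/
noncomputable def tracePairing : F × F →ₗ[k] Dual k (F × F) :=
  (LinearMap.coprodEquiv k).toLinearMap ∘ₗ
    (Algebra.traceForm k F).prodMap (Algebra.traceForm k F)

lemma tracePairing_apply (u v : F × F) :
    tracePairing k F u v = Algebra.trace k F (v.1 * u.1 + v.2 * u.2) := by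
  simp [tracePairing, Algebra.traceForm_apply, mul_comm]

variable (k) in
/-- The coordinate at `x ≠ 0` of the words `(Tr(a f(x) + b x))ₓ`, as a functional of the
parameters `(a, b)`. -/
noncomputable def codeCoord (f : F → F) (x : {x : F // x ≠ 0}) : Dual k (F × F) :=
  tracePairing k F (f x, x)

lemma codeCoord_apply (f : F → F) (x : {x : F // x ≠ 0}) (v : F × F) :
    codeCoord k f x v = Algebra.trace k F (v.1 * f x + v.2 * x) :=
  tracePairing_apply _ _

section Separable

variable [FiniteDimensional k F] [Algebra.IsSeparable k F]

lemma traceForm_injective : Function.Injective (Algebra.traceForm k F) :=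
  LinearMap.ker_eq_bot.1 <|
    LinearMap.separatingLeft_iff_ker_eq_bot.1 (traceForm_nondegenerate k F).1

lemma tracePairing_injective : Function.Injective (tracePairing k F) :=
  (LinearMap.coprodEquiv k).injective.comp (traceForm_injective.prodMap traceForm_injective)

lemma linearIndependent_tracePairing {f : F → F}
    (hf : ∀ x, x ≠ 0 → ∀ c : k, c ≠ 0 → c ≠ 1 → f (algebraMap k F c * x) ≠ algebraMap k F c * f x)
    {x y : F} (hx : x ≠ 0) (hy : y ≠ 0) (hxy : x ≠ y) :
    LinearIndependent k ![tracePairing k F (f x, x), tracePairing k F (f y, y)] := by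
  have h : LinearIndependent k ![(f x, x), (f y, y)] := by
    refine (LinearIndependent.pair_iff' fun h ↦ hx (congrArg Prod.snd h)).2 fun c hc ↦ ?_
    rw [Prod.smul_mk, Algebra.smul_def, Algebra.smul_def, Prod.mk.injEq] at hc
    obtain ⟨hcf, rfl⟩ := hc
    refine hf x hx c ?_ ?_ hcf.symm
    · rintro rfl
      simp at hy
    · rintro rfl
      simp at hxy
  have hcomp : tracePairing k F ∘ ![(f x, x), (f y, y)] =
      ![tracePairing k F (f x, x), tracePairing k F (f y, y)] := by
    ext1 i
    fin_cases i <;> rfl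
  exact hcomp ▸ h.map' (tracePairing k F) (LinearMap.ker_eq_bot.2 tracePairing_injective)

lemma codeCoord_ne_zero (f : F → F) (x : {x : F // x ≠ 0}) : codeCoord k f x ≠ 0 :=
  (map_ne_zero_iff _ tracePairing_injective).2 fun h ↦ x.2 (congrArg Prod.snd h)

lemma pairwise_linearIndependent_codeCoord {f : F → F}
    (hf : ∀ x, x ≠ 0 → ∀ c : k, c ≠ 0 → c ≠ 1 → f (algebraMap k F c * x) ≠ algebraMap k F c * f x) :
    Pairwise fun x y ↦ LinearIndependent k ![codeCoord k f x, codeCoord k f y] :=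
  fun x y hxy ↦ linearIndependent_tracePairing hf x.2 y.2 (Subtype.coe_ne_coe.2 hxy)

end Separable

lemma hammingNorm_codeCoord_zero [DecidableEq k] [Fintype F] [DecidableEq F] (f : F → F) :
    hammingNorm (fun x ↦ codeCoord k f x 0) = 0 := by
  simp only [map_zero, ← Pi.zero_def, hammingNorm_zero]

lemma hammingNorm_codeCoord [DecidableEq k] [Fintype F] [DecidableEq F] {f : F → F} (h0 : f 0 = 0)
    (v : F × F) :
    hammingNorm (fun x ↦ codeCoord k f x v) =
      #{x | Algebra.trace k F (v.1 * f x + v.2 * x) ≠ 0} := by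
  rw [hammingNorm, ← card_map (Function.Embedding.subtype _)]
  congr 1
  ext x
  suffices Algebra.trace k F (v.1 * f x + v.2 * x) ≠ 0 → x ≠ 0 by
    simpa [codeCoord_apply] using this
  rintro hx rfl
  simp [h0] at hx

lemma zeroExcess_codeCoord [Fintype k] [DecidableEq k] [Fintype F] [DecidableEq F] {f : F → F}
    (h0 : f 0 = 0) (v : F × F) :
    zeroExcess (codeCoord k f) v =
      Fintype.card k * #{x | Algebra.trace k F (v.1 * f x + v.2 * x) = 0} - Fintype.card F := by
  have h : (#{x | Algebra.trace k F (v.1 * f x + v.2 * x) = 0} : ℤ) +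
      hammingNorm (fun x ↦ codeCoord k f x v) = Fintype.card F := by
    rw [hammingNorm_codeCoord h0, ← Nat.cast_add, card_filter_add_card_filter_not, card_univ]
  rw [zeroExcess, ← Nat.cast_add_one, card_ne_zero_add_one]
  linear_combination (-Fintype.card k : ℤ) * h

end TraceCode

lemma pow_lt_sub_one_mul_pow_two_mul {p : ℕ} (hp : 2 < p) (M : ℕ) :
    p ^ M < (p - 1) * p ^ (2 * M) := by
  calc p ^ M ≤ p ^ (2 * M) := Nat.pow_le_pow_right (by lia) (by lia)
    _ < (p - 1) * p ^ (2 * M) := (Nat.lt_mul_iff_one_lt_left (by positivity)).2 (by lia)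

section WeightDistribution

variable {p : ℕ} [Fact p.Prime] {F : Type*} [Field F] [Fintype F] [Algebra (ZMod p) F]
  {f : F → F} {M : ℕ}

variable (hp : Odd p) (hF : Fintype.card F = p ^ (2 * M + 1)) (hf : IsPerfectNonlinear f)
include hp hF hf

lemma card_trace_eq_zero_sub_pow_mem {v : F × F} (hv : v ≠ 0) :
    (#{x | Algebra.trace (ZMod p) F (v.1 * f x + v.2 * x) = 0} : ℤ) - p ^ (2 * M) ∈
      ({0, (p : ℤ) ^ M, -(p : ℤ) ^ M} : Set ℤ) := by
  obtain ⟨a, b⟩ := v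
  by_cases ha : a = 0
  · have hb : b ≠ 0 := fun hb ↦ hv (Prod.ext ha hb)
    have h := card_filter_eq_zero_mul_card <|
      (map_ne_zero_iff (Algebra.traceForm (ZMod p) F) traceForm_injective).2 hb
    rw [ZMod.card, hF, pow_succ] at h
    simp only [ha, zero_mul, zero_add]
    left
    exact sub_eq_zero.2 (mod_cast Nat.eq_of_mul_eq_mul_right hp.pos h)
  · exact (hf.const_mul_add_const_mul ha b).card_fiber_sub_pow_mem hp hF
      (ℓ := (Algebra.trace (ZMod p) F).toAddMonoidHom) (Algebra.trace_surjective _ _) 0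

variable [DecidableEq F]

omit hp hf in
lemma mul_hammingNorm_add_zeroExcess (v : F × F) :
    (p : ℤ) * hammingNorm (fun x ↦ codeCoord (ZMod p) f x v) + zeroExcess (codeCoord (ZMod p) f) v =
      (p - 1) * p ^ (2 * M + 1) := by
  rw [zeroExcess, ← Nat.cast_add_one, card_ne_zero_add_one, hF, ZMod.card]
  push_cast
  ring

variable (h0 : f 0 = 0)
include h0

lemma zeroExcess_codeCoord_mem {v : F × F} (hv : v ≠ 0) :
    zeroExcess (codeCoord (ZMod p) f) v ∈
      ({0, (p : ℤ) ^ (M + 1), -(p : ℤ) ^ (M + 1)} : Set ℤ) := by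
  have hfactor : zeroExcess (codeCoord (ZMod p) f) v =
      p * (#{x | Algebra.trace (ZMod p) F (v.1 * f x + v.2 * x) = 0} - p ^ (2 * M)) := by
    rw [zeroExcess_codeCoord h0, hF, ZMod.card]
    push_cast
    ring
  rw [hfactor, pow_succ']
  rcases card_trace_eq_zero_sub_pow_mem hp hF hf hv with h | h | h <;> rw [h] <;> simp

lemma hammingNorm_codeCoord_mem {v : F × F} (hv : v ≠ 0) :
    hammingNorm (fun x ↦ codeCoord (ZMod p) f x v) ∈
      ({(p - 1) * p ^ (2 * M) - p ^ M, (p - 1) * p ^ (2 * M), (p - 1) * p ^ (2 * M) + p ^ M} :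
        Set ℕ) := by
  have hp0 : (p : ℤ) ≠ 0 := Nat.cast_ne_zero.2 hp.pos.ne'
  have hmul := mul_hammingNorm_add_zeroExcess (f := f) hF v
  have hlt := pow_lt_sub_one_mul_pow_two_mul (two_lt_of_odd hp) M
  rw [Set.mem_insert_iff, Set.mem_insert_iff, Set.mem_singleton_iff]
  rcases zeroExcess_codeCoord_mem hp hF hf h0 hv with h | h | h <;> rw [h] at hmul
  · right; left
    zify [hp.pos]
    exact mul_left_cancel₀ hp0 (by linear_combination hmul)
  · left
    zify [hp.pos, hlt.le]
    exact mul_left_cancel₀ hp0 (by linear_combination hmul)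
  · right; right
    zify [hp.pos]
    exact mul_left_cancel₀ hp0 (by linear_combination hmul)

lemma hammingNorm_codeCoord_ne_zero {v : F × F} (hv : v ≠ 0) :
    hammingNorm (fun x ↦ codeCoord (ZMod p) f x v) ≠ 0 := by
  have hlt := pow_lt_sub_one_mul_pow_two_mul (two_lt_of_odd hp) M
  rcases hammingNorm_codeCoord_mem hp hF hf h0 hv with h | h | h <;> rw [h] <;> lia

omit [DecidableEq F] in
lemma pi_codeCoord_injective :
    Function.Injective (LinearMap.pi (codeCoord (ZMod p) f)) := by
  refine (injective_iff_map_eq_zero _).2 fun v hv ↦ ?_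
  contrapose! hv
  classical
  exact hammingNorm_ne_zero_iff.1 (hammingNorm_codeCoord_ne_zero hp hF hf h0 hv)

lemma ACount_eq_card_filter (i : ℕ) :
    ACount p F f i = #{v : F × F | hammingNorm (fun x ↦ codeCoord (ZMod p) f x v) = i} := by
  have himage : {g | g ∈ CCode p F f ∧ wtC p F g = i} =
      LinearMap.pi (codeCoord (ZMod p) f) ''
        {v | hammingNorm (fun x ↦ codeCoord (ZMod p) f x v) = i} := by
    have hword (a b : F) : (fun x ↦ codeCoord (ZMod p) f x (a, b)) =
        fun x : {x : F // x ≠ 0} ↦ Algebra.trace (ZMod p) F (a * f x + b * x) :=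
      funext fun x ↦ codeCoord_apply f x (a, b)
    ext g
    constructor
    · rintro ⟨⟨a, b, rfl⟩, hg⟩
      exact ⟨(a, b), by rwa [← hword] at hg, hword a b⟩
    · rintro ⟨⟨a, b⟩, hg, rfl⟩
      exact ⟨⟨a, b, hword a b⟩, hg⟩
  rw [ACount, himage, Nat.card_image_of_injective (pi_codeCoord_injective hp hF hf h0),
    Nat.card_coe_set_eq, Set.ncard_eq_toFinset_card', Set.toFinset_ofPred]

lemma ACount_zero : ACount p F f 0 = 1 := by
  rw [ACount_eq_card_filter hp hF hf h0, card_eq_one]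
  refine ⟨0, ext fun v ↦ ?_⟩
  rw [mem_filter_univ, mem_singleton]
  refine ⟨fun h ↦ ?_, ?_⟩
  · contrapose! h
    exact hammingNorm_codeCoord_ne_zero hp hF hf h0 h
  · rintro rfl
    exact hammingNorm_codeCoord_zero f

lemma ACount_eq_zero {i : ℕ} (hi : i ∉ ({0, (p - 1) * p ^ (2 * M) - p ^ M,
    (p - 1) * p ^ (2 * M), (p - 1) * p ^ (2 * M) + p ^ M} : Set ℕ)) : ACount p F f i = 0 := by
  rw [ACount_eq_card_filter hp hF hf h0, card_eq_zero, filter_eq_empty_iff]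
  rintro v - rfl
  by_cases hv : v = 0
  · exact hi (.inl (hv ▸ hammingNorm_codeCoord_zero f))
  · exact hi (.inr (hammingNorm_codeCoord_mem hp hF hf h0 hv))

lemma ACount_eq_card_filter_zeroExcess {i : ℕ} (hi : i ≠ 0) {e : ℤ}
    (hie : p * i + e = (p - 1) * p ^ (2 * M + 1)) :
    ACount p F f i = #{v | v ≠ 0 ∧ zeroExcess (codeCoord (ZMod p) f) v = e} := by
  have hp0 : (p : ℤ) ≠ 0 := Nat.cast_ne_zero.2 hp.pos.ne'
  rw [ACount_eq_card_filter hp hF hf h0]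
  congr 1
  ext v
  have hmul := mul_hammingNorm_add_zeroExcess (f := f) hF v
  rw [mem_filter_univ, mem_filter_univ]
  constructor
  · rintro rfl
    refine ⟨?_, by linear_combination hmul - hie⟩
    rintro rfl
    exact hi (hammingNorm_codeCoord_zero f)
  · rintro ⟨-, rfl⟩
    exact Nat.cast_injective (R := ℤ) (mul_left_cancel₀ hp0 (by linear_combination hmul - hie))

variable (hhom : ∀ x, x ≠ 0 → ∀ c : ZMod p, c ≠ 0 → c ≠ 1 →
  f (algebraMap (ZMod p) F c * x) ≠ algebraMap (ZMod p) F c * f x)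
include hhom

lemma two_mul_ACount (ε : ℤˣ) {i : ℕ} (hi : (i : ℤ) = (p - 1) * p ^ (2 * M) - ε * p ^ M) :
    2 * (ACount p F f i : ℤ) = (p - 1) * (p ^ (2 * M + 1) - 1) * (p ^ (2 * M) + ε * p ^ M) := by
  have hp0 : (p : ℤ) ≠ 0 := Nat.cast_ne_zero.2 hp.pos.ne'
  have hn : (Fintype.card {x : F // x ≠ 0} : ℤ) + 1 = p ^ (2 * M + 1) := by
    rw [← Nat.cast_add_one, card_ne_zero_add_one, hF, Nat.cast_pow]
  have hi0 : i ≠ 0 := by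
    have hlt := pow_lt_sub_one_mul_pow_two_mul (two_lt_of_odd hp) M
    zify [hp.pos] at hlt
    have hpow : 0 ≤ (p : ℤ) ^ M := by positivity
    rintro rfl
    rcases Int.units_eq_one_or ε with rfl | rfl <;> push_cast at hi <;> linarith
  have hT : (ε * p ^ (M + 1) : ℤ) ^ 2 =
      Fintype.card (ZMod p) * (Fintype.card {x : F // x ≠ 0} + 1) := by
    rw [ZMod.card, hn, mul_pow, ← Units.val_pow_eq_pow_val, Int.units_sq, Units.val_one]
    ring
  have hmem (v : F × F) (hv : v ≠ 0) : zeroExcess (codeCoord (ZMod p) f) v ∈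
      ({0, ε * (p : ℤ) ^ (M + 1), -(ε * (p : ℤ) ^ (M + 1))} : Set ℤ) := by
    have h := zeroExcess_codeCoord_mem hp hF hf h0 hv
    rcases Int.units_eq_one_or ε with rfl | rfl
    · simpa using h
    · simpa [or_comm] using h
  have h := two_mul_card_mul_card_filter_zeroExcess_eq (codeCoord_ne_zero f)
    (pairwise_linearIndependent_codeCoord hhom) card_prod_self_eq_sq hT hmem
  rw [ACount_eq_card_filter_zeroExcess hp hF hf h0 hi0 (e := ε * p ^ (M + 1)) (by rw [hi]; ring)]
  rw [hn, ZMod.card] at h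
  apply mul_left_cancel₀ hp0
  linear_combination h + (p - 1) * (p ^ (2 * M + 1) + ε * p ^ (M + 1)) * hn

lemma ACount_sub_one_mul_pow :
    ACount p F f ((p - 1) * p ^ (2 * M)) = (p ^ (2 * M) + 1) * (p ^ (2 * M + 1) - 1) := by
  have hn : Fintype.card {x : F // x ≠ 0} + 1 = p ^ (2 * M + 1) := card_ne_zero_add_one.trans hF
  have hT : ((p : ℤ) ^ (M + 1)) ^ 2 =
      Fintype.card (ZMod p) * (Fintype.card {x : F // x ≠ 0} + 1) := by
    rw [ZMod.card, ← Nat.cast_add_one, hn, Nat.cast_pow]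
    ring
  have h := card_mul_card_filter_zeroExcess_eq_zero (codeCoord_ne_zero f)
    (pairwise_linearIndependent_codeCoord hhom) card_prod_self_eq_sq hT
    fun v hv ↦ zeroExcess_codeCoord_mem hp hF hf h0 hv
  have hi0 : (p - 1) * p ^ (2 * M) ≠ 0 :=
    (pow_lt_sub_one_mul_pow_two_mul (two_lt_of_odd hp) M).ne_bot
  rw [ACount_eq_card_filter_zeroExcess hp hF hf h0 hi0 (e := 0) (by push_cast [hp.pos]; ring)]
  rw [hn, ZMod.card, ← Nat.add_sub_cancel (n := Fintype.card _), hn] at h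
  apply Nat.eq_of_mul_eq_mul_left hp.pos
  rw [h]
  ring

end WeightDistribution

/-- the weight distribution of `C_Π` for `m` odd, `Π` perfect nonlinear with
`Π(0) = 0` and `Π(cx) ≠ cΠ(x)` for all `x ∈ 𝔽_q^*` and `c ∈ 𝔽_p \ {0,1}`. -/
theorem stmt_14 (p m : ℕ) [Fact p.Prime] (hp : Odd p) (hm : Odd m)
    (F : Type*) [Field F] [Fintype F] [DecidableEq F] [Algebra (ZMod p) F]
    (hF : Fintype.card F = p ^ m)
    (Pl : F → F)
    (hPN : ∀ a : F, a ≠ 0 → Function.Bijective (fun x : F => Pl (x + a) - Pl x))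
    (h0 : Pl 0 = 0)
    (hhom : ∀ x : F, x ≠ 0 → ∀ c : ZMod p, c ≠ 0 → c ≠ 1 →
      Pl (algebraMap (ZMod p) F c * x) ≠ algebraMap (ZMod p) F c * Pl x) :
    ACount p F Pl 0 = 1 ∧
    ACount p F Pl ((p - 1) * p ^ (m - 1) - p ^ ((m - 1) / 2))
      = (p - 1) * (p ^ m - 1) * (p ^ (m - 1) + p ^ ((m - 1) / 2)) / 2 ∧
    ACount p F Pl ((p - 1) * p ^ (m - 1)) = (p ^ (m - 1) + 1) * (p ^ m - 1) ∧
    ACount p F Pl ((p - 1) * p ^ (m - 1) + p ^ ((m - 1) / 2))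
      = (p - 1) * (p ^ m - 1) * (p ^ (m - 1) - p ^ ((m - 1) / 2)) / 2 ∧
    (∀ i : ℕ, i ∉ ({0, (p - 1) * p ^ (m - 1) - p ^ ((m - 1) / 2), (p - 1) * p ^ (m - 1),
        (p - 1) * p ^ (m - 1) + p ^ ((m - 1) / 2)} : Set ℕ) →
      ACount p F Pl i = 0) := by
  obtain ⟨M, rfl⟩ := hm
  rw [Nat.add_sub_cancel, Nat.mul_div_cancel_left M two_pos]
  have hlt := pow_lt_sub_one_mul_pow_two_mul (two_lt_of_odd hp) M
  have hle : p ^ M ≤ p ^ (2 * M) := Nat.pow_le_pow_right hp.pos (by lia)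
  have hpow : 1 ≤ p ^ (2 * M + 1) := Nat.one_le_pow _ _ hp.pos
  refine ⟨ACount_zero hp hF hPN h0, (Nat.div_eq_of_eq_mul_right two_pos ?_).symm,
    ACount_sub_one_mul_pow hp hF hPN h0 hhom, (Nat.div_eq_of_eq_mul_right two_pos ?_).symm,
    fun i ↦ ACount_eq_zero hp hF hPN h0⟩
  · have h := two_mul_ACount hp hF hPN h0 hhom 1
      (i := (p - 1) * p ^ (2 * M) - p ^ M) (by zify [hp.pos, hlt.le]; simp)
    zify [hp.pos, hpow]
    simpa using h.symm
  · have h := two_mul_ACount hp hF hPN h0 hhom (-1)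
      (i := (p - 1) * p ^ (2 * M) + p ^ M) (by zify [hp.pos]; simp)
    zify [hp.pos, hpow, hle]
    simpa [← sub_eq_add_neg] using h.symm
end
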